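/- arXiv:1802.03507 — 2 statements merged into one kernel-verified Lean document; each statement's English description precedes it below -/
import Mathlib

section
/- Let q be a prime power and n a positive integer coprime to q. Then there exists a bijection Φ : N(n,q) → F(n,q) such that for every subset I ⊆ {1,...,m}, Φ restricts to a bijection from N_I onto F_I. -/
open Polynomial

/-- Two elements of a commutative monoid are rotation-equivalent w.r.t. `x` iff they lie
in the same orbit under multiplication by `x` (stated symmetrically so that it is an
equivalence relation). For `Q = F[X]/(X^n-1)` and `x` the image of `X` (a unit),
the classes are exactly the orbits `{α, Xα, …, X^{n-1}α}`, i.e. necklaces. -/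
def rotSetoid {R : Type*} [CommMonoid R] (x : R) : Setoid R where
  r a b := ∃ j k : ℕ, x ^ j * a = x ^ k * b
  iseqv := by
    refine ⟨fun a => ⟨0, 0, rfl⟩, ?_, ?_⟩
    · rintro a b ⟨j, k, h⟩
      exact ⟨k, j, h.symm⟩
    · rintro a b c ⟨j, k, h1⟩ ⟨j', k', h2⟩
      refine ⟨j' + j, k + k', ?_⟩
      rw [pow_add, mul_assoc, h1, ← mul_assoc, ← pow_add, add_comm j' k, pow_add,
        mul_assoc, h2, ← mul_assoc, ← pow_add]

/-- `Q = F[X]/(X^n - 1)`. -/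
abbrev Qring (F : Type) [Field F] (n : ℕ) := AdjoinRoot ((X : F[X]) ^ n - 1)

/-- The image of `X` in `Q`. -/
noncomputable def Xbar (F : Type) [Field F] (n : ℕ) : Qring F n := AdjoinRoot.root _

/-- The image in `Q` of the minimal polynomial over `F` of an element `x` of the
algebraic closure of `F`; for `x = ω^{s_i}` this is the element `P_i` of `Q`. -/
noncomputable def Pbar (F : Type) [Field F] (n : ℕ) (x : AlgebraicClosure F) : Qring F n :=
  AdjoinRoot.mk _ (minpoly F x)


theorem combine_aux {A B ι : Type*} [Finite A] [Finite B] (SA : ι → Set A) (SB : ι → Set B)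
    (hA : ∀ a, ∃! I, a ∈ SA I) (hB : ∀ b, ∃! I, b ∈ SB I)
    (hc : ∀ I, Nat.card (SA I) = Nat.card (SB I)) :
    ∃ Φ : A → B, Function.Bijective Φ ∧ ∀ I, Set.BijOn Φ (SA I) (SB I) := by
  choose fA hfA hfA' using hA
  choose fB hfB hfB' using hB
  have hSA : ∀ I a, a ∈ SA I ↔ fA a = I := fun I a =>
    ⟨fun h => (hfA' a I h).symm, fun h => h ▸ hfA a⟩
  have hSB : ∀ I a, a ∈ SB I ↔ fB a = I := fun I a =>
    ⟨fun h => (hfB' a I h).symm, fun h => h ▸ hfB a⟩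
  have key : ∀ I, Nonempty ({a // fA a = I} ≃ {b // fB b = I}) := fun I => by
    have e1 : {a // fA a = I} ≃ SA I := Equiv.subtypeEquivRight fun a => (hSA I a).symm
    have e2 : {a // fB a = I} ≃ SB I := Equiv.subtypeEquivRight fun a => (hSB I a).symm
    exact ⟨e1.trans (((Finite.card_eq.1 (hc I)).some).trans e2.symm)⟩
  let E := fun I => (key I).some
  let Φ := Equiv.ofFiberEquiv E
  have hΦ : ∀ a, fB (Φ a) = fA a := fun a => Equiv.ofFiberEquiv_map E a
  refine ⟨Φ, Φ.bijective, fun I => ⟨?_, Φ.injective.injOn, ?_⟩⟩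
  · intro a ha
    rw [hSB, hΦ, ← hSA]; exact ha
  · intro b hb
    refine ⟨Φ.symm b, ?_, by simp⟩
    rw [hSA, ← hΦ, Equiv.apply_symm_apply, ← hSB]; exact hb

theorem necklace_card {m : ℕ} (K : Fin m → Type) [∀ i, Field (K i)] [∀ i, Finite (K i)]
    (R : Type) [CommRing R] (E : R ≃+* ∀ i, K i) (x : R) (w : ∀ i, (K i)ˣ)
    (hw : ∀ i, E x i = w i) (I : Finset (Fin m)) (d : ℕ)
    (hd : ∀ k : ℕ, d ∣ k ↔ ∀ i ∈ I, w i ^ k = 1) :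
    Nat.card {c : Quotient (rotSetoid x) | ∃ α : R, Quotient.mk (rotSetoid x) α = c ∧
      ∀ i, (E α i = 0 ↔ i ∉ I)} * d = ∏ i ∈ I, (Nat.card (K i) - 1) := by
  classical
  let U := ∀ i : I, (K i)ˣ
  let u : U := fun i => w i
  let v : U → ∀ i, K i := fun a i => if h : i ∈ I then (a ⟨i, h⟩ : K i) else 0
  have hv : ∀ a i, v a i = 0 ↔ i ∉ I := by
    intro a i
    by_cases h : i ∈ I <;> simp [v, h]
  let ψ : U → {c : Quotient (rotSetoid x) | ∃ α : R, Quotient.mk (rotSetoid x) α = c ∧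
      ∀ i, (E α i = 0 ↔ i ∉ I)} := fun a =>
    ⟨Quotient.mk _ (E.symm (v a)), E.symm (v a), rfl, fun i => by simpa using hv a i⟩
  have hsurj : Function.Surjective ψ := by
    rintro ⟨c, α, rfl, hα⟩
    refine ⟨fun i => Units.mk0 (E α i) (fun h => (hα i).1 h i.2), ?_⟩
    apply Subtype.ext
    change Quotient.mk _ _ = Quotient.mk _ _
    congr 1
    rw [RingEquiv.symm_apply_eq]
    funext i
    by_cases h : i ∈ I
    · simp [v, h]
    · simp [v, h, (hα i).2 h]
  have hker : ∀ a b, ψ a = ψ b ↔ ∃ j k : ℕ, u ^ j * a = u ^ k * b := by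
    intro a b
    have : ψ a = ψ b ↔ ∃ j k : ℕ, x ^ j * E.symm (v a) = x ^ k * E.symm (v b) := by
      rw [Subtype.ext_iff]
      exact Quotient.eq
    rw [this]
    refine exists_congr fun j => exists_congr fun k => ?_
    rw [← E.injective.eq_iff]
    simp only [map_mul, map_pow, RingEquiv.apply_symm_apply]
    constructor
    · intro h
      funext i
      have := congrFun h i
      apply Units.ext
      change (w i : K i) ^ j * (a i : K i) = (w i : K i) ^ k * (b i : K i)
      simpa [hw, v] using this
    · intro h
      funext i
      by_cases hi : i ∈ I
      · have h1 := congrArg Units.val (congrFun h ⟨i, hi⟩)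
        change (w i : K i) ^ j * (a ⟨i, hi⟩ : K i) = (w i : K i) ^ k * (b ⟨i, hi⟩ : K i) at h1
        simpa [hw, v, hi] using h1
      · simp [v, hi]
  have hquot : Nat.card (U ⧸ Subgroup.zpowers u) = Nat.card {c : Quotient (rotSetoid x) |
      ∃ α : R, Quotient.mk (rotSetoid x) α = c ∧ ∀ i, (E α i = 0 ↔ i ∉ I)} := by
    have hrel : ∀ a b : U, (QuotientGroup.leftRel (Subgroup.zpowers u)) a b ↔ ψ a = ψ b := by
      intro a b
      rw [QuotientGroup.leftRel_apply, hker, ← mem_powers_iff_mem_zpowers]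
      constructor
      · rintro ⟨k, hk⟩
        refine ⟨k, 0, ?_⟩
        simp only at hk
        rw [hk, pow_zero, one_mul, mul_comm, mul_inv_cancel_left]
      · rintro ⟨j, k, h⟩
        rw [mem_powers_iff_mem_zpowers]
        refine ⟨(j : ℤ) - k, ?_⟩
        simp only [zpow_sub, zpow_natCast]
        rw [mul_inv_eq_iff_eq_mul, mul_comm a⁻¹ b, mul_comm (b * a⁻¹), ← mul_assoc, ← h,
          mul_inv_cancel_right]
    refine Nat.card_congr ((Quotient.congrRight hrel).trans
      (Setoid.quotientKerEquivOfSurjective ψ hsurj))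
  have hord : orderOf u = d := by
    have : ∀ k, orderOf u ∣ k ↔ d ∣ k := fun k => by
      rw [hd, orderOf_dvd_iff_pow_eq_one, funext_iff]
      exact ⟨fun h i hi => h ⟨i, hi⟩, fun h i => h i i.2⟩
    exact Nat.dvd_antisymm ((this d).2 dvd_rfl) ((this _).1 dvd_rfl)
  have := Subgroup.card_eq_card_quotient_mul_card_subgroup (Subgroup.zpowers u)
  rw [hquot, Nat.card_zpowers, hord] at this
  rw [← this, Nat.card_pi]
  simp only [Nat.card_units]
  exact Finset.prod_coe_sort I (fun i => Nat.card (K i) - 1)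

theorem func_card {m n : ℕ} [NeZero n] (M : Fin m → ℕ) (hM : ∀ i, 1 < M i) (s : Fin m → ZMod n)
    (hs : ∀ i, ((M i - 1 : ℕ) : ZMod n) * s i = 0) (I : Finset (Fin m)) (d : ℕ)
    (hd : ∀ k : ℕ, d ∣ k ↔ ∀ i ∈ I, (k : ZMod n) * s i = 0) :
    Nat.card {v : ∀ i, Fin (M i) // (∀ i, (v i : ℕ) = M i - 1 ↔ i ∉ I) ∧
      ∑ i, ((v i : ℕ) : ZMod n) * s i = 0} * d = ∏ i ∈ I, (M i - 1) := by
  classical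
  have hL : ∀ i, NeZero (M i - 1) := fun i => ⟨by have := hM i; omega⟩
  let φi : ∀ i, ZMod (M i - 1) →+ ZMod n := fun i =>
    ZMod.lift (M i - 1) ⟨(AddMonoidHom.mulRight (s i)).comp (Int.castAddHom (ZMod n)), by
      simpa using hs i⟩
  have hφi : ∀ i (k : ℕ), φi i (k : ZMod (M i - 1)) = (k : ZMod n) * s i := by
    intro i k
    have := ZMod.lift_coe (M i - 1) ⟨(AddMonoidHom.mulRight (s i)).comp
      (Int.castAddHom (ZMod n)), by simpa using hs i⟩ (k : ℤ)
    simpa using this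
  let A := ∀ i : I, ZMod (M i - 1)
  let φ : A →+ ZMod n := ∑ i : I, (φi i).comp (Pi.evalAddMonoidHom _ i)
  have hφ : ∀ a, φ a = ∑ i : I, φi i (a i) := fun a => by
    simp [φ, AddMonoidHom.finsetSum_apply]
    rfl
  have hφv : ∀ v : ∀ i, Fin (M i), (∀ i, (v i : ℕ) = M i - 1 ↔ i ∉ I) →
      ∑ i, ((v i : ℕ) : ZMod n) * s i = φ (fun i => ((v i : ℕ) : ZMod _)) := by
    intro v hv
    rw [hφ]
    simp only [hφi]
    rw [Finset.sum_coe_sort I (fun i => ((v i : ℕ) : ZMod n) * s i)]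
    symm
    apply Finset.sum_subset (Finset.subset_univ _)
    intro i _ hi
    rw [(hv i).2 hi, hs]
  have hcard : Nat.card {v : ∀ i, Fin (M i) // (∀ i, (v i : ℕ) = M i - 1 ↔ i ∉ I) ∧
      ∑ i, ((v i : ℕ) : ZMod n) * s i = 0} = Nat.card φ.ker := by
    refine Nat.card_eq_of_bijective
      (fun v => ⟨fun i => ((v.1 i : ℕ) : ZMod _), by
        rw [AddMonoidHom.mem_ker, ← hφv v.1 v.2.1, v.2.2]⟩) ⟨?_, ?_⟩
    · rintro ⟨v, hv, hv'⟩ ⟨w, hw, hw'⟩ h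
      apply Subtype.ext
      funext i
      apply Fin.ext
      by_cases hi : i ∈ I
      · have h1 := congrFun (congrArg Subtype.val h) ⟨i, hi⟩
        simp only at h1
        have hv1 : (v i : ℕ) < M i - 1 := by
          have := (not_congr (hv i)).2 (by simpa using hi)
          have := (v i).2
          omega
        have hw1 : (w i : ℕ) < M i - 1 := by
          have := (not_congr (hw i)).2 (by simpa using hi)
          have := (w i).2
          omega
        have h2 := congrArg ZMod.val h1
        rwa [ZMod.val_cast_of_lt hv1, ZMod.val_cast_of_lt hw1] at h2
      · exact ((hv i).2 hi).trans ((hw i).2 hi).symm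
    · rintro ⟨a, ha⟩
      let v : ∀ i, Fin (M i) := fun i => if h : i ∈ I then
        ⟨(a ⟨i, h⟩).val, lt_of_lt_of_le (ZMod.val_lt _) (Nat.sub_le _ _)⟩
        else ⟨M i - 1, by have := hM i; omega⟩
      have hv : ∀ i, (v i : ℕ) = M i - 1 ↔ i ∉ I := by
        intro i
        by_cases h : i ∈ I
        · simp only [v, h, dif_pos, not_true, iff_false]
          exact (ZMod.val_lt (a ⟨i, h⟩)).ne
        · simp [v, h]
      have hva : (fun i : I => ((v i : ℕ) : ZMod (M i - 1))) = a := by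
        funext i
        simp [v]
      refine ⟨⟨v, hv, ?_⟩, Subtype.ext hva⟩
      rw [hφv v hv, hva]; exact ha
  obtain ⟨g, hg⟩ := IsAddCyclic.exists_generator (α := φ.range)
  have hrange : Nat.card φ.range = d := by
    rw [← addOrderOf_eq_card_of_forall_mem_zmultiples hg]
    have : ∀ k, addOrderOf g ∣ k ↔ d ∣ k := fun k => by
      rw [hd, addOrderOf_dvd_iff_nsmul_eq_zero]
      constructor
      · intro hk i hi
        have hmem : s i ∈ φ.range := by
          refine ⟨Pi.single ⟨i, hi⟩ 1, ?_⟩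
          rw [hφ, Finset.sum_eq_single ⟨i, hi⟩]
          · simpa using hφi i 1
          · intro b _ hb
            simp [Pi.single_eq_of_ne hb]
          · simp
        obtain ⟨z, hz⟩ := hg ⟨s i, hmem⟩
        have : k • (⟨s i, hmem⟩ : φ.range) = 0 := by
          rw [← hz]
          simp only
          rw [smul_comm, hk, smul_zero]
        simpa using congrArg Subtype.val this
      · intro hk
        apply Subtype.ext
        obtain ⟨a, ha⟩ := g.2
        simp only [AddSubgroup.coe_nsmul, ← ha, hφ, AddSubgroup.coe_zero]
        rw [Finset.smul_sum]
        refine Finset.sum_eq_zero fun i _ => ?_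
        rw [← ZMod.natCast_zmod_val (a i), hφi, nsmul_eq_mul, mul_left_comm, hk i i.2, mul_zero]
    exact Nat.dvd_antisymm ((this d).2 dvd_rfl) ((this _).1 dvd_rfl)
  have := AddSubgroup.card_mul_index φ.ker
  rw [AddSubgroup.index_ker, hrange] at this
  rw [hcard, this, Nat.card_pi]
  simp only [Nat.card_zmod]
  exact Finset.prod_coe_sort I (fun i => M i - 1)

/-- Size of the cyclotomic coset of `z`. -/
noncomputable def cosetLen (q n : ℕ) (z : ZMod n) : ℕ :=
  Function.minimalPeriod (fun y : ZMod n => (q : ZMod n) * y) z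

theorem coset_iter (q n : ℕ) (z : ZMod n) (k : ℕ) :
    (fun y : ZMod n => (q : ZMod n) * y)^[k] z = (q : ZMod n) ^ k * z := by
  simp [mul_left_iterate]

theorem cosetLen_pos (q n : ℕ) [NeZero n] (hqn : Nat.Coprime q n) (z : ZMod n) :
    0 < cosetLen q n z := by
  apply Function.minimalPeriod_pos_of_mem_periodicPts
  refine ⟨Nat.totient n, Nat.totient_pos.2 (NeZero.pos n), ?_⟩
  rw [Function.IsPeriodicPt, Function.IsFixedPt, coset_iter]
  have := ZMod.pow_totient (ZMod.unitOfCoprime q hqn)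
  have := congrArg Units.val this
  simp only [Units.val_pow_eq_pow_val, ZMod.coe_unitOfCoprime, Units.val_one] at this
  rw [this, one_mul]

theorem cosetLen_spec (q n : ℕ) (z : ZMod n) :
    (q : ZMod n) ^ cosetLen q n z * z = z := by
  rw [← coset_iter]
  exact Function.isPeriodicPt_minimalPeriod _ _

/-- The parametrization of `ZMod n` by the cyclotomic cosets. -/
theorem coset_bij (q n : ℕ) [NeZero n] (hqn : Nat.Coprime q n) (m : ℕ) (s : Fin m → ℕ)
    (hS : ∀ z : ZMod n, ∃! i : Fin m, ∃ j : ℕ, z = (q : ZMod n) ^ j * (s i : ZMod n)) :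
    Function.Bijective (fun p : (Σ i : Fin m, Fin (cosetLen q n (s i : ZMod n))) =>
      (q : ZMod n) ^ (p.2 : ℕ) * (s p.1 : ZMod n)) := by
  constructor
  · rintro ⟨i, j⟩ ⟨i', j'⟩ h
    simp only at h
    obtain rfl : i = i' := (hS _).unique ⟨j, rfl⟩ ⟨j', h⟩
    have : (j : ℕ) = j' := by
      refine Function.iterate_injOn_Iio_minimalPeriod
        (f := fun y : ZMod n => (q : ZMod n) * y) (x := (s i : ZMod n)) j.2 j'.2 ?_
      simp only [coset_iter]
      exact h
    rw [Fin.ext this]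
  · intro z
    obtain ⟨i, ⟨j, rfl⟩, -⟩ := hS z
    refine ⟨⟨i, ⟨j % cosetLen q n (s i : ZMod n), Nat.mod_lt _ (cosetLen_pos q n hqn _)⟩⟩, ?_⟩
    simp only
    rw [← coset_iter, ← coset_iter]
    exact Function.iterate_mod_minimalPeriod_eq

theorem digits_last (q l : ℕ) (hq : 0 < q) (f : Fin l → Fin q) :
    (finFunctionFinEquiv f : ℕ) = q ^ l - 1 ↔ ∀ j, (f j : ℕ) = q - 1 := by
  let c : Fin l → Fin q := fun _ => ⟨q - 1, by omega⟩
  have hc : (finFunctionFinEquiv c : ℕ) = q ^ l - 1 := by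
    rw [finFunctionFinEquiv_apply]
    simp only [c]
    rw [Fin.sum_univ_eq_sum_range (fun j => (q - 1) * q ^ j) l]
    obtain ⟨r, rfl⟩ : ∃ r, q = r + 1 := ⟨q - 1, by omega⟩
    have : ∑ j ∈ Finset.range l, (r + 1 - 1) * (r + 1) ^ j + 1 = (r + 1) ^ l := by
      induction l with
      | zero => simp
      | succ l ih =>
        rw [Finset.sum_range_succ, pow_succ, add_right_comm, ih (fun _ => 0) ]
        simp; ring
    omega
  rw [← hc, ← Fin.ext_iff, finFunctionFinEquiv.injective.eq_iff, funext_iff]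
  exact forall_congr' fun j => Fin.ext_iff

theorem func_card' (q n : ℕ) (hq : 1 < q) [NeZero n] (hqn : Nat.Coprime q n)
    (m : ℕ) (s : Fin m → ℕ)
    (hS : ∀ z : ZMod n, ∃! i : Fin m, ∃ j : ℕ, z = (q : ZMod n) ^ j * (s i : ZMod n))
    (I : Finset (Fin m)) (d : ℕ)
    (hd : ∀ k : ℕ, d ∣ k ↔ ∀ i ∈ I, (k : ZMod n) * (s i : ZMod n) = 0) :
    Nat.card {f : {f : ZMod n → Fin q // ∑ z : ZMod n, z * ((f z : ℕ) : ZMod n) = 0} |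
      ∀ i, ((∀ z : ZMod n,
              (∃ j : ℕ, z = (q : ZMod n) ^ j * (s i : ZMod n)) → (f.1 z : ℕ) = q - 1)
            ↔ i ∉ I)} * d = ∏ i ∈ I, (q ^ cosetLen q n (s i : ZMod n) - 1) := by
  have hpos := fun i => cosetLen_pos q n hqn (s i : ZMod n)
  let l : Fin m → ℕ := fun i => cosetLen q n (s i : ZMod n)
  rw [← func_card (fun i => q ^ l i)
    (fun i => Nat.one_lt_pow (hpos i).ne' hq) (fun i => (s i : ZMod n)) (fun i => by
      rw [Nat.cast_sub (Nat.one_le_pow _ _ (by omega))]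
      have := cosetLen_spec q n (s i : ZMod n)
      simp only [Nat.cast_pow, Nat.cast_one, sub_mul, l]
      rw [this]; simp) I d hd]
  congr 1
  let e := Equiv.ofBijective _ (coset_bij q n hqn m s hS)
  have he : ∀ i j, e ⟨i, j⟩ = (q : ZMod n) ^ (j : ℕ) * (s i : ZMod n) := fun i j => rfl
  let T : (ZMod n → Fin q) ≃ ∀ i, Fin (q ^ l i) :=
    ((e.arrowCongr (Equiv.refl (Fin q))).symm.trans
      (Equiv.piCurry (fun (i : Fin m) (_ : Fin (l i)) => Fin q))).trans
      (Equiv.piCongrRight fun i => finFunctionFinEquiv)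
  have hT : ∀ f i, T f i = finFunctionFinEquiv (fun j => f (e ⟨i, j⟩)) := fun f i => rfl
  have hTlast : ∀ f i, (T f i : ℕ) = q ^ l i - 1 ↔ ∀ z : ZMod n,
      (∃ j : ℕ, z = (q : ZMod n) ^ j * (s i : ZMod n)) → (f z : ℕ) = q - 1 := by
    intro f i
    rw [hT, digits_last _ _ (by omega)]
    constructor
    · rintro h z ⟨k, hk⟩
      obtain ⟨⟨i', j⟩, rfl⟩ := e.surjective z
      obtain rfl : i' = i := (hS _).unique ⟨j, he i' j⟩ ⟨k, hk⟩
      exact h j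
    · intro h j
      exact h _ ⟨j, he i j⟩
  have hTsum : ∀ f, ∑ z : ZMod n, z * ((f z : ℕ) : ZMod n) =
      ∑ i, ((T f i : ℕ) : ZMod n) * (s i : ZMod n) := by
    intro f
    rw [← e.sum_comp, Fintype.sum_sigma]
    refine Finset.sum_congr rfl fun i _ => ?_
    rw [hT, finFunctionFinEquiv_apply]
    push_cast
    rw [Finset.sum_mul]
    refine Finset.sum_congr rfl fun j _ => ?_
    rw [he]; ring
  let T' := T.subtypeEquiv (p := fun f => (∀ i, ((∀ z : ZMod n,
              (∃ j : ℕ, z = (q : ZMod n) ^ j * (s i : ZMod n)) → (f z : ℕ) = q - 1)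
            ↔ i ∉ I)) ∧ ∑ z : ZMod n, z * ((f z : ℕ) : ZMod n) = 0)
     (q := fun v => (∀ i, (v i : ℕ) = q ^ l i - 1 ↔ i ∉ I) ∧
      ∑ i, ((v i : ℕ) : ZMod n) * (s i : ZMod n) = 0) (fun f => by
        simp only [hTlast, hTsum])
  rw [← Nat.card_congr T']
  refine Nat.card_congr ⟨fun f => ⟨f.1.1, f.2, f.1.2⟩, fun f => ⟨⟨f.1, f.2.2⟩, f.2.1⟩,
    fun _ => rfl, fun _ => rfl⟩

theorem frob_iter_apply (F : Type) [Field F] [Fintype F] (k : ℕ) (y : AlgebraicClosure F) :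
    ((FiniteField.frobeniusAlgHom F (AlgebraicClosure F)) ^ k) y = y ^ (Fintype.card F ^ k) := by
  rw [AlgHom.coe_pow, FiniteField.coe_frobeniusAlgHom, pow_iterate]

/-- The subfield with `q^k` elements of the algebraic closure. -/
noncomputable def fixK (F : Type) [Field F] [Fintype F] (k : ℕ) :
    Subfield (AlgebraicClosure F) :=
  RingHom.eqLocusField
    (((FiniteField.frobeniusAlgHom F (AlgebraicClosure F)) ^ k : _ →ₐ[F] _) :
      AlgebraicClosure F →+* AlgebraicClosure F) (RingHom.id _)

theorem mem_fixK (F : Type) [Field F] [Fintype F] (k : ℕ) (y : AlgebraicClosure F) :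
    y ∈ fixK F k ↔ y ^ (Fintype.card F ^ k) = y := by
  rw [fixK, RingHom.mem_eqLocusField, ← frob_iter_apply]
  rfl

theorem card_fixK (F : Type) [Field F] [Fintype F] (k : ℕ) (hk : 0 < k) :
    Nat.card (fixK F k) = Fintype.card F ^ k := by
  classical
  obtain ⟨p, hp⟩ := CharP.exists F
  have := hp
  have hdvd : p ∣ Fintype.card F ^ k := by
    refine dvd_pow ?_ hk.ne'
    rw [← CharP.cast_eq_zero_iff F p]
    exact FiniteField.cast_card_eq_zero F
  have h1 : 1 < Fintype.card F ^ k := Nat.one_lt_pow hk.ne' Fintype.one_lt_card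
  have hsep : (X ^ (Fintype.card F ^ k) - X : F[X]).Separable := galois_poly_separable p _ hdvd
  have hcard := card_rootSet_eq_natDegree (K := AlgebraicClosure F) hsep
    (IsAlgClosed.splits _)
  rw [FiniteField.X_pow_card_sub_X_natDegree_eq F h1] at hcard
  rw [← hcard, ← Nat.card_eq_fintype_card]
  refine Nat.card_congr (Equiv.subtypeEquivRight fun y => ?_)
  rw [mem_fixK, mem_rootSet_of_ne (FiniteField.X_pow_card_sub_X_ne_zero F h1)]
  simp [sub_eq_zero]

theorem prim_pow_eq {M : Type*} [CommMonoid M] {ω : M} {n : ℕ} (hω : IsPrimitiveRoot ω n)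
    {a b : ℕ} (h : (a : ZMod n) = (b : ZMod n)) : ω ^ a = ω ^ b := by
  rw [ZMod.natCast_eq_natCast_iff] at h
  have h' : a % n = b % n := h
  rw [← pow_mod_orderOf ω a, ← pow_mod_orderOf ω b, ← hω.eq_orderOf, h']

theorem prim_pow_eq_one {M : Type*} [CommMonoid M] {ω : M} {n : ℕ} (hω : IsPrimitiveRoot ω n)
    {a : ℕ} : ω ^ a = 1 ↔ (a : ZMod n) = 0 := by
  rw [hω.pow_eq_one_iff_dvd, ZMod.natCast_eq_zero_iff]

theorem exists_ring_equiv
    (q n : ℕ) [NeZero n] (hqn : Nat.Coprime q n)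
    (F : Type) [Field F] [Fintype F] (hF : Fintype.card F = q)
    (ω : AlgebraicClosure F) (hω : IsPrimitiveRoot ω n)
    (m : ℕ) (s : Fin m → ℕ)
    (hS : ∀ z : ZMod n, ∃! i : Fin m, ∃ j : ℕ, z = (q : ZMod n) ^ j * (s i : ZMod n)) :
    Finite (Qring F n) ∧
    ∃ E : Qring F n ≃+* ∀ i : Fin m, fixK F (cosetLen q n (s i : ZMod n)),
      ∀ p i, ((E (AdjoinRoot.mk _ p) i : fixK F _) : AlgebraicClosure F) = aeval (ω ^ s i) p := by
  classical
  have hn : 0 < n := NeZero.pos n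
  have hmonic : ((X : F[X]) ^ n - 1).Monic := by
    simpa using monic_X_pow_sub_C (1 : F) hn.ne'
  have hdeg : ((X : F[X]) ^ n - 1).natDegree = n := by
    simpa using natDegree_X_pow_sub_C (n := n) (r := (1 : F))
  have hroot : ∀ i, eval₂ (algebraMap F (AlgebraicClosure F)) (ω ^ s i) ((X : F[X]) ^ n - 1) = 0 := by
    intro i
    simp [pow_right_comm ω (s i) n, hω.pow_eq_one]
  let ev : ∀ i, Qring F n →+* AlgebraicClosure F := fun i =>
    AdjoinRoot.lift (algebraMap F (AlgebraicClosure F)) (ω ^ s i) (hroot i)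
  have hev : ∀ i p, ev i (AdjoinRoot.mk _ p) = aeval (ω ^ s i) p := fun i p => by
    simp only [ev]
    rw [AdjoinRoot.lift_mk]; rfl
  have hfrob : ∀ i k (p : F[X]), (aeval (ω ^ s i) p) ^ (q ^ k) = aeval (ω ^ (s i * q ^ k)) p := by
    intro i k p
    rw [← hF, ← frob_iter_apply, ← aeval_algHom_apply, frob_iter_apply, pow_mul]
  have hmem : ∀ i a, ev i a ∈ fixK F (cosetLen q n (s i : ZMod n)) := by
    intro i a
    obtain ⟨p, rfl⟩ := AdjoinRoot.mk_surjective a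
    rw [mem_fixK, hF, hev, hfrob]
    congr 2
    apply prim_pow_eq hω
    have := cosetLen_spec q n (s i : ZMod n)
    push_cast
    rw [mul_comm, this]
  let E : Qring F n →+* ∀ i : Fin m, fixK F (cosetLen q n (s i : ZMod n)) :=
    RingHom.pi fun i => (ev i).codRestrict _ (hmem i)
  have hE : ∀ a i, ((E a i : fixK F _) : AlgebraicClosure F) = ev i a := fun a i => rfl
  have hinj : Function.Injective E := by
    rw [injective_iff_map_eq_zero]
    intro a ha
    obtain ⟨p, rfl⟩ := AdjoinRoot.mk_surjective a
    have h0 : ∀ i, aeval (ω ^ s i) p = 0 := fun i => by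
      rw [← hev, ← hE, ha]; rfl
    have h1 : ∀ k : ℕ, aeval (ω ^ k) p = 0 := by
      intro k
      obtain ⟨i, ⟨j, hj⟩, -⟩ := hS (k : ZMod n)
      have : ω ^ k = ω ^ (s i * q ^ j) := by
        apply prim_pow_eq hω
        rw [hj]; push_cast; ring
      rw [this, ← hfrob, h0, zero_pow]
      rw [← hF]
      exact (pow_pos Fintype.card_pos _).ne'
    rw [AdjoinRoot.mk_eq_zero, ← modByMonic_eq_zero_iff_dvd hmonic]
    have h2 : (p %ₘ (X ^ n - 1)).map (algebraMap F (AlgebraicClosure F)) = 0 := by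
      apply eq_zero_of_natDegree_lt_card_of_eval_eq_zero (ι := Fin n) _
        (f := fun k => ω ^ (k : ℕ))
      · intro a b hab
        exact Fin.ext (hω.pow_inj a.2 b.2 hab)
      · intro k
        rw [eval_map_algebraMap, modByMonic_eq_sub_mul_div _, map_sub, map_mul, h1]
        simp [pow_right_comm ω (k : ℕ) n, hω.pow_eq_one]
      · rw [natDegree_map, Fintype.card_fin]
        conv_rhs => rw [← hdeg]
        apply natDegree_modByMonic_lt _ hmonic
        intro h
        rw [h] at hdeg
        simp at hdeg
        omega
    exact (Polynomial.map_eq_zero _).1 h2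
  let pb := AdjoinRoot.powerBasis' hmonic
  have : Module.Finite F (Qring F n) := pb.finite
  have hfin : Finite (Qring F n) := Module.finite_of_finite F
  have hcQ : Nat.card (Qring F n) = q ^ n := by
    rw [Module.natCard_eq_pow_finrank (K := F), pb.finrank, Nat.card_eq_fintype_card, hF]
    simp [pb, hdeg]
  have hcK : ∀ i, Nat.card (fixK F (cosetLen q n (s i : ZMod n))) =
      q ^ (cosetLen q n (s i : ZMod n)) := fun i => by
    rw [card_fixK F _ (cosetLen_pos q n hqn _), hF]
  have hq0 : 0 < q := hF ▸ Fintype.card_pos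
  have : ∀ i, Finite (fixK F (cosetLen q n (s i : ZMod n))) := fun i =>
    Nat.finite_of_card_ne_zero (by rw [hcK]; positivity)
  have hsum : ∑ i, cosetLen q n (s i : ZMod n) = n := by
    have := Fintype.card_of_bijective (coset_bij q n hqn m s hS)
    simpa [Fintype.card_sigma, ZMod.card] using this
  have hbij : Function.Bijective E := by
    refine (Nat.bijective_iff_injective_and_card E).2 ⟨hinj, ?_⟩
    rw [hcQ, Nat.card_pi]
    simp only [hcK]
    rw [Finset.prod_pow_eq_pow_sum, hsum]
  refine ⟨hfin, RingEquiv.ofBijective E hbij, fun p i => ?_⟩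
  rw [← hev]; rfl

/-- For `q` a prime power coprime to `n`, there is a bijection `Φ` from the set `N(n,q)`
of necklaces (orbits of `Q = F_q[X]/(X^n-1)` under multiplication by `X`) to the set
`F(n,q)` of functions `f : ZMod n → {0,…,q-1}` with `∑ z, z·f(z) ≡ 0 (mod n)`, which
moreover restricts, for every `I ⊆ {1,…,m}`, to a bijection from `N_I` onto `F_I`.
Here `S_1,…,S_m` are the cyclotomic cosets (orbits of `z ↦ q·z` on `ZMod n`) with
representatives `s i`, `ω` is a primitive `n`-th root of unity over `F_q`,
`N_I` consists of the orbits of those `α` divisible by `P_i` exactly for `i ∉ I`, and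
`F_I` of those `f ∈ F(n,q)` taking the value `q-1` on all of `S_i` exactly for `i ∉ I`. -/
theorem exists_necklace_bijection
    (q n : ℕ) (hq : IsPrimePow q) (hn : 0 < n) [NeZero n] (hqn : Nat.Coprime q n)
    (F : Type) [Field F] [Fintype F] (hF : Fintype.card F = q)
    (ω : AlgebraicClosure F) (hω : IsPrimitiveRoot ω n)
    (m : ℕ) (s : Fin m → ℕ)
    (hS : ∀ z : ZMod n, ∃! i : Fin m, ∃ j : ℕ, z = (q : ZMod n) ^ j * (s i : ZMod n)) :
    ∃ Φ : Quotient (rotSetoid (Xbar F n)) →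
        {f : ZMod n → Fin q // ∑ z : ZMod n, z * ((f z : ℕ) : ZMod n) = 0},
      Function.Bijective Φ ∧
      ∀ I : Finset (Fin m),
        Set.BijOn Φ
          {c | ∃ α : Qring F n, Quotient.mk (rotSetoid (Xbar F n)) α = c ∧
              ∀ i, (Pbar F n (ω ^ (s i)) ∣ α ↔ i ∉ I)}
          {f | ∀ i, ((∀ z : ZMod n,
              (∃ j : ℕ, z = (q : ZMod n) ^ j * (s i : ZMod n)) → (f.1 z : ℕ) = q - 1)
            ↔ i ∉ I)} := by
  obtain ⟨hfin, E, hE⟩ := exists_ring_equiv q n hqn F hF ω hω m s hS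
  have hq1 : 1 < q := hq.one_lt
  have hcK : ∀ i, Nat.card (fixK F (cosetLen q n (s i : ZMod n))) =
      q ^ (cosetLen q n (s i : ZMod n)) := fun i => by
    rw [card_fixK F _ (cosetLen_pos q n hqn _), hF]
  have : ∀ i, Finite (fixK F (cosetLen q n (s i : ZMod n))) := fun i =>
    Nat.finite_of_card_ne_zero (by rw [hcK]; positivity)
  have hX : ∀ i, ((E (Xbar F n) i : fixK F _) : AlgebraicClosure F) = ω ^ s i := fun i => by
    have := hE X i
    rw [aeval_X] at this
    exact this
  have hω0 : ω ≠ 0 := hω.ne_zero hn.ne'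
  have hX0 : ∀ i, E (Xbar F n) i ≠ 0 := fun i h => by
    have := hX i
    rw [h] at this
    exact pow_ne_zero (s i) hω0 this.symm
  have hP : ∀ i α, Pbar F n (ω ^ s i) ∣ α ↔ E α i = 0 := by
    intro i α
    obtain ⟨p, rfl⟩ := AdjoinRoot.mk_surjective α
    constructor
    · rintro ⟨β, hβ⟩
      rw [hβ, map_mul, Pi.mul_apply]
      have : E (Pbar F n (ω ^ s i)) i = 0 := by
        apply Subtype.ext
        exact (hE _ i).trans (minpoly.aeval _ _)
      rw [this, zero_mul]
    · intro h
      apply _root_.map_dvd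
      apply minpoly.dvd
      rw [← hE, h]; rfl
  simp only [hP]
  apply combine_aux
  · intro c
    induction c using Quotient.inductionOn with
    | h α =>
      classical
      refine ⟨Finset.univ.filter fun i => E α i ≠ 0, ⟨α, rfl, by simp⟩, ?_⟩
      rintro I ⟨β, hβ, hI⟩
      obtain ⟨j, k, hjk⟩ : ∃ j k : ℕ, Xbar F n ^ j * β = Xbar F n ^ k * α := Quotient.exact hβ
      ext i
      have h1 := congrFun (congrArg E hjk) i
      simp only [map_mul, map_pow, Pi.mul_apply, Pi.pow_apply] at h1
      have h2 : E β i = 0 ↔ E α i = 0 := by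
        constructor
        · intro h
          rw [h, mul_zero] at h1
          exact (mul_eq_zero.1 h1.symm).resolve_left (pow_ne_zero _ (hX0 i))
        · intro h
          rw [h, mul_zero] at h1
          exact (mul_eq_zero.1 h1).resolve_left (pow_ne_zero _ (hX0 i))
      have h3 := hI i
      rw [h2] at h3
      simp only [Finset.mem_filter, Finset.mem_univ, true_and]
      tauto
  · intro f
    classical
    refine ⟨Finset.univ.filter fun i => ¬ (∀ z : ZMod n,
              (∃ j : ℕ, z = (q : ZMod n) ^ j * (s i : ZMod n)) → (f.1 z : ℕ) = q - 1), ?_, ?_⟩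
    · intro i
      simp only [Finset.mem_filter, Finset.mem_univ, true_and, not_not]
    · intro I hI
      ext i
      have := hI i
      simp only [Finset.mem_filter, Finset.mem_univ, true_and]
      tauto
  · intro I
    let g : I → ZMod n := fun i => (s i : ZMod n)
    have hd : ∀ k : ℕ, addOrderOf g ∣ k ↔ ∀ i ∈ I, (k : ZMod n) * (s i : ZMod n) = 0 := by
      intro k
      rw [addOrderOf_dvd_iff_nsmul_eq_zero, funext_iff]
      simp only [← nsmul_eq_mul]
      exact ⟨fun h i hi => h ⟨i, hi⟩, fun h i => h i i.2⟩
    have hd0 : 0 < addOrderOf g := addOrderOf_pos g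
    have h1 := func_card' q n hq1 hqn m s hS I _ hd
    have h2 := necklace_card (fun i => fixK F (cosetLen q n (s i : ZMod n))) (Qring F n) E
      (Xbar F n) (fun i => Units.mk0 _ (hX0 i)) (fun i => rfl) I (addOrderOf g) (by
        intro k
        rw [hd]
        refine forall₂_congr fun i _ => ?_
        rw [Units.ext_iff, Subtype.ext_iff]
        simp only [Units.val_pow_eq_pow_val, Units.val_mk0, SubmonoidClass.coe_pow, hX,
          Units.val_one]
        rw [← pow_mul, OneMemClass.coe_one, prim_pow_eq_one hω]
        push_cast
        rw [mul_comm])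
    simp only [hcK] at h2
    exact Nat.eq_of_mul_eq_mul_right hd0 (h2.trans h1.symm)
end

section
/- Let q be a prime power and n a positive integer coprime to q. Then for every subset I ⊆ {1,...,m}, the sets N_I and F_I have the same cardinality. -/
open Polynomial

lemma aux_cosets (q n m : ℕ) [NeZero n] (hqn : Nat.Coprime q n) (s : Fin m → ℕ)
    (hS : ∀ z : ZMod n, ∃! i : Fin m, ∃ j : ℕ, z = (q : ZMod n) ^ j * (s i : ZMod n)) :
    ∃ d : Fin m → ℕ, (∀ i, 0 < d i) ∧
      (∀ i, (q : ZMod n) ^ (d i) * (s i : ZMod n) = s i) ∧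
      Function.Bijective (fun p : (Σ i, Fin (d i)) =>
        (q : ZMod n) ^ (p.2 : ℕ) * (s p.1 : ZMod n)) := by
  have hper : ∀ i, Function.IsPeriodicPt (fun z : ZMod n => (q : ZMod n) * z) n.totient
      (s i : ZMod n) := by
    intro i
    have h1 : (q : ZMod n) ^ n.totient = 1 := by
      have := ZMod.pow_totient (ZMod.unitOfCoprime q hqn)
      have h2 := congrArg (Units.val) this
      rwa [Units.val_pow_eq_pow_val, ZMod.coe_unitOfCoprime, Units.val_one] at h2
    unfold Function.IsPeriodicPt Function.IsFixedPt
    rw [mul_left_iterate]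
    simp [h1]
  refine ⟨fun i => Function.minimalPeriod (fun z : ZMod n => (q : ZMod n) * z) (s i : ZMod n),
    ?_, ?_, ?_, ?_⟩
  · intro i
    exact (hper i).minimalPeriod_pos (Nat.totient_pos.2 (NeZero.pos n))
  · intro i
    have := Function.iterate_minimalPeriod (f := fun z : ZMod n => (q : ZMod n) * z)
      (x := (s i : ZMod n))
    rw [mul_left_iterate] at this
    exact this
  · rintro ⟨i, j⟩ ⟨i', j'⟩ h
    simp only at h
    obtain rfl : i = i' := (hS ((q : ZMod n) ^ (j : ℕ) * (s i : ZMod n))).unique ⟨j, rfl⟩ ⟨j', h⟩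
    have := Function.iterate_injOn_Iio_minimalPeriod
      (f := fun z : ZMod n => (q : ZMod n) * z) (x := (s i : ZMod n)) j.2 j'.2
      (by simpa only [mul_left_iterate] using h)
    rw [Fin.ext this]
  · intro z
    obtain ⟨i, ⟨j, hj⟩, -⟩ := hS z
    have h := Function.iterate_mod_minimalPeriod_eq
      (f := fun z : ZMod n => (q : ZMod n) * z) (x := (s i : ZMod n)) (n := j)
    rw [mul_left_iterate, mul_left_iterate] at h
    exact ⟨⟨i, ⟨_, Nat.mod_lt j
      ((hper i).minimalPeriod_pos (Nat.totient_pos.2 (NeZero.pos n)))⟩⟩, h.trans hj.symm⟩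

lemma aux_digits (q d : ℕ) (hq : 2 ≤ q) (g : Fin d → Fin q) :
    ((finFunctionFinEquiv g : ℕ) = q ^ d - 1) ↔ ∀ j, (g j : ℕ) = q - 1 := by
  have hc : ((finFunctionFinEquiv (fun _ : Fin d => (⟨q - 1, by omega⟩ : Fin q)) : ℕ)
      = q ^ d - 1) := by
    rw [finFunctionFinEquiv_apply]
    simp only
    rw [← Finset.mul_sum, Fin.sum_univ_eq_sum_range (fun i => q ^ i), Nat.geomSum_eq hq]
    exact Nat.mul_div_cancel' (by simpa using Nat.sub_dvd_pow_sub_pow q 1 d)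
  constructor
  · intro h j
    have : g = fun _ : Fin d => (⟨q - 1, by omega⟩ : Fin q) :=
      finFunctionFinEquiv.injective (Fin.ext (h.trans hc.symm))
    rw [this]
  · intro h
    rw [← hc]
    congr 2
    funext j
    exact Fin.ext (h j)

lemma aux_rhs (q n m : ℕ) [NeZero n] (hq : 2 ≤ q) (s : Fin m → ℕ)
    (hS : ∀ z : ZMod n, ∃! i : Fin m, ∃ j : ℕ, z = (q : ZMod n) ^ j * (s i : ZMod n))
    (d : Fin m → ℕ) (hd : ∀ i, 0 < d i)
    (hds : ∀ i, (q : ZMod n) ^ (d i) * (s i : ZMod n) = s i)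
    (hb : Function.Bijective (fun p : (Σ i, Fin (d i)) =>
        (q : ZMod n) ^ (p.2 : ℕ) * (s p.1 : ZMod n))) (I : Finset (Fin m)) :
    ∃ e : ℕ, 0 < e ∧ (∀ k : ℕ, e ∣ k ↔ ∀ i ∈ I, (k : ZMod n) * (s i : ZMod n) = 0) ∧
      Nat.card {f : ZMod n → Fin q //
          (∑ z : ZMod n, z * ((f z : ℕ) : ZMod n) = 0) ∧
          ∀ i, ((∀ z : ZMod n,
              (∃ j : ℕ, z = (q : ZMod n) ^ j * (s i : ZMod n)) → (f z : ℕ) = q - 1)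
            ↔ i ∉ I)} * e = ∏ i, if i ∈ I then q ^ d i - 1 else 1 := by
  classical
  let b : (Σ i, Fin (d i)) ≃ ZMod n := Equiv.ofBijective _ hb
  have hb' : ∀ p, b p = (q : ZMod n) ^ (p.2 : ℕ) * (s p.1 : ZMod n) := fun p => rfl
  let E : (ZMod n → Fin q) ≃ ((i : Fin m) → Fin (q ^ d i)) :=
    (Equiv.arrowCongr b.symm (Equiv.refl (Fin q))).trans
      ((Equiv.piCurry (fun _ _ => Fin q)).trans
        (Equiv.piCongrRight fun i => finFunctionFinEquiv))
  have hE : ∀ f i, E f i = finFunctionFinEquiv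
      (fun j : Fin (d i) => f ((q : ZMod n) ^ (j : ℕ) * (s i : ZMod n))) := by
    intro f i
    rfl
  have hE1 : ∀ f i, ((∀ z : ZMod n,
      (∃ j : ℕ, z = (q : ZMod n) ^ j * (s i : ZMod n)) → (f z : ℕ) = q - 1) ↔
      (E f i : ℕ) = q ^ d i - 1) := by
    intro f i
    rw [hE, aux_digits q (d i) hq]
    constructor
    · intro h j
      exact h _ ⟨j, rfl⟩
    · rintro h z hz
      obtain ⟨⟨i', j⟩, rfl⟩ := hb.2 z
      obtain rfl : i = i' := (hS _).unique hz ⟨j, rfl⟩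
      exact h j
  have hE2 : ∀ f : ZMod n → Fin q, ∑ z : ZMod n, z * ((f z : ℕ) : ZMod n) =
      ∑ i, (s i : ZMod n) * ((E f i : ℕ) : ZMod n) := by
    intro f
    rw [← Equiv.sum_comp b, Fintype.sum_sigma]
    refine Finset.sum_congr rfl fun i _ => ?_
    rw [hE, finFunctionFinEquiv_apply]
    push_cast
    rw [Finset.mul_sum]
    refine Finset.sum_congr rfl fun j _ => ?_
    rw [hb']
    ring
  have hpow : ∀ i, 2 ≤ q ^ d i := fun i =>
    hq.trans (Nat.le_self_pow (hd i).ne' q)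
  let N : Fin m → ℕ := fun i => if i ∈ I then q ^ d i - 1 else 1
  have hN : ∀ i, 0 < N i := by
    intro i
    have := hpow i
    simp only [N]
    split_ifs <;> omega
  have : ∀ i, NeZero (N i) := fun i => ⟨(hN i).ne'⟩
  let t : Fin m → ZMod n := fun i => if i ∈ I then (s i : ZMod n) else 0
  have hs0 : ∀ i, ((q ^ d i - 1 : ℕ) : ZMod n) * (s i : ZMod n) = 0 := by
    intro i
    rw [Nat.cast_sub (by have := hpow i; omega)]
    push_cast
    rw [sub_mul, hds, one_mul, sub_self]
  have hNt : ∀ i, (N i : ZMod n) * t i = 0 := by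
    intro i
    by_cases h : i ∈ I
    · simp only [N, t, h, if_true]
      exact hs0 i
    · simp [t, h]
  let ψ : ∀ i, ZMod (N i) →+ ZMod n := fun i =>
    ZMod.lift (N i) ⟨zmultiplesHom (ZMod n) (t i), by simpa using hNt i⟩
  have hψ : ∀ i (k : ℕ), ψ i (k : ZMod (N i)) = (k : ZMod n) * t i := by
    intro i k
    have := ZMod.lift_coe (N i) ⟨zmultiplesHom (ZMod n) (t i), by simpa using hNt i⟩ (k : ℤ)
    simpa using this
  let φ : (∀ i, ZMod (N i)) →+ ZMod n :=
    ∑ i, (ψ i).comp (Pi.evalAddMonoidHom (fun i => ZMod (N i)) i)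
  have hφ : ∀ a, φ a = ∑ i, ψ i (a i) := by
    intro a
    simp [φ, AddMonoidHom.finsetSum_apply]
  have hφE : ∀ f : ZMod n → Fin q, (∀ i, ((E f i : ℕ) = q ^ d i - 1 ↔ i ∉ I)) →
      φ (fun i => ((E f i : ℕ) : ZMod (N i))) = ∑ z : ZMod n, z * ((f z : ℕ) : ZMod n) := by
    intro f hf
    rw [hE2, hφ]
    refine Finset.sum_congr rfl fun i _ => ?_
    rw [hψ, mul_comm]
    by_cases h : i ∈ I
    · simp [t, h]
    · rw [(hf i).2 h]
      rw [mul_comm (s i : ZMod n), hs0]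
      simp [t, h]
  refine ⟨Nat.card φ.range, Nat.card_pos, ?_, ?_⟩
  · intro k
    rw [← IsAddCyclic.exponent_eq_card, AddMonoid.exponent_dvd_iff_forall_nsmul_eq_zero]
    constructor
    · intro h i hi
      have h1 := h ⟨φ (Pi.single i ((1 : ℕ) : ZMod (N i))), ⟨_, rfl⟩⟩
      have h2 : k • φ (Pi.single i ((1 : ℕ) : ZMod (N i))) = 0 := congrArg Subtype.val h1
      have h3 : φ (Pi.single i ((1 : ℕ) : ZMod (N i))) = s i := by
        rw [hφ, Finset.sum_eq_single i]
        · rw [Pi.single_eq_same, hψ]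
          simp [t, hi]
        · intro j _ hj
          rw [Pi.single_eq_of_ne hj, map_zero]
        · simp
      rw [h3, nsmul_eq_mul] at h2
      exact h2
    · rintro h ⟨_, a, rfl⟩
      apply Subtype.ext
      simp only [AddSubgroup.coe_nsmul, AddSubgroup.coe_zero, nsmul_eq_mul]
      rw [hφ, Finset.mul_sum]
      refine Finset.sum_eq_zero fun i _ => ?_
      rw [← ZMod.natCast_zmod_val (a i), hψ]
      by_cases hi : i ∈ I
      · simp only [t, hi, if_true]
        rw [mul_left_comm, h i hi, mul_zero]
      · simp [t, hi]
  · have hcard : Nat.card {f : ZMod n → Fin q //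
          (∑ z : ZMod n, z * ((f z : ℕ) : ZMod n) = 0) ∧
          ∀ i, ((∀ z : ZMod n,
              (∃ j : ℕ, z = (q : ZMod n) ^ j * (s i : ZMod n)) → (f z : ℕ) = q - 1)
            ↔ i ∉ I)} = Nat.card φ.ker := by
      refine Nat.card_eq_of_bijective (fun f => ⟨fun i => ((E f.1 i : ℕ) : ZMod (N i)), ?_⟩) ⟨?_, ?_⟩
      · rw [AddMonoidHom.mem_ker, hφE f.1 (fun i => by rw [← hE1]; exact f.2.2 i)]
        exact f.2.1
      · rintro ⟨f, hf1, hf2⟩ ⟨f', hf1', hf2'⟩ h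
        simp only [hE1] at hf2 hf2'
        apply Subtype.ext
        apply E.injective
        funext i
        have h1 := congrFun (congrArg Subtype.val h) i
        simp only at h1
        apply Fin.ext
        by_cases hi : i ∈ I
        · have e1 : N i = q ^ d i - 1 := by simp [N, hi]
          rw [ZMod.natCast_eq_natCast_iff', e1] at h1
          have l1 := (E f i).2
          have l2 := (E f' i).2
          have l3 : (E f i : ℕ) ≠ q ^ d i - 1 := fun h => (hf2 i).1 h hi
          have l4 : (E f' i : ℕ) ≠ q ^ d i - 1 := fun h => (hf2' i).1 h hi
          rwa [Nat.mod_eq_of_lt (by omega), Nat.mod_eq_of_lt (by omega)] at h1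
        · rw [(hf2 i).2 hi, (hf2' i).2 hi]
      · rintro ⟨a, ha⟩
        have hlt : ∀ i, (if i ∈ I then (a i).val else q ^ d i - 1) < q ^ d i := by
          intro i
          have := hpow i
          split_ifs with hi
          · have l := ZMod.val_lt (a i)
            have e1 : N i = q ^ d i - 1 := by simp [N, hi]
            omega
          · omega
        let f := E.symm (fun i => ⟨_, hlt i⟩)
        have hf : ∀ i, (E f i : ℕ) = if i ∈ I then (a i).val else q ^ d i - 1 := by
          intro i
          simp [f]
        have hfI : ∀ i, ((E f i : ℕ) = q ^ d i - 1 ↔ i ∉ I) := by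
          intro i
          rw [hf]
          by_cases hi : i ∈ I
          · have l := ZMod.val_lt (a i)
            have e1 : N i = q ^ d i - 1 := by simp [N, hi]
            simp only [hi, if_true, not_true, iff_false]
            omega
          · simp [hi]
        have hfa : (fun i => ((E f i : ℕ) : ZMod (N i))) = a := by
          funext i
          rw [hf]
          by_cases hi : i ∈ I
          · simp [hi]
          · have : Subsingleton (ZMod (N i)) := by
              have e1 : N i = 1 := by simp [N, hi]
              rw [e1]
              infer_instance
            exact Subsingleton.elim _ _
        refine ⟨⟨f, ?_, fun i => by rw [hE1]; exact hfI i⟩, Subtype.ext hfa⟩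
        rw [← hφE f hfI, hfa]
        exact ha
    rw [hcard, ← AddSubgroup.index_ker, AddSubgroup.card_mul_index, Nat.card_pi]
    refine Finset.prod_congr rfl fun i _ => ?_
    rw [Nat.card_zmod]

section
variable (F : Type) [Field F] (n : ℕ)

/-- Evaluation at an `n`-th root of unity. -/
noncomputable def evQ (x : AlgebraicClosure F) (hx : x ^ n = 1) :
    Qring F n →ₐ[F] AlgebraicClosure F :=
  AdjoinRoot.liftAlgHom _ (Algebra.ofId F (AlgebraicClosure F)) x (by simp [hx])

lemma evQ_mk (x : AlgebraicClosure F) (hx : x ^ n = 1) (p : F[X]) :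
    evQ F n x hx (AdjoinRoot.mk _ p) = aeval x p := by
  rw [evQ, AdjoinRoot.liftAlgHom_mk]
  rfl

lemma evQ_X (x : AlgebraicClosure F) (hx : x ^ n = 1) :
    evQ F n x hx (Xbar F n) = x := by
  have := evQ_mk F n x hx X
  rw [AdjoinRoot.mk_X, aeval_X] at this
  exact this

lemma Xbar_pow : Xbar F n ^ n = 1 := by
  have h : AdjoinRoot.mk ((X : F[X]) ^ n - 1) ((X : F[X]) ^ n - 1) = 0 := AdjoinRoot.mk_self
  rw [map_sub, map_pow, AdjoinRoot.mk_X, map_one, sub_eq_zero] at h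
  exact h

lemma Pbar_dvd_iff (x : AlgebraicClosure F) (hx : x ^ n = 1) (α : Qring F n) :
    Pbar F n x ∣ α ↔ evQ F n x hx α = 0 := by
  obtain ⟨p, rfl⟩ := AdjoinRoot.mk_surjective α
  rw [evQ_mk, Pbar]
  constructor
  · rintro ⟨β, hβ⟩
    rw [← evQ_mk F n x hx p, hβ, map_mul, evQ_mk, minpoly.aeval, zero_mul]
  · intro h
    exact map_dvd _ (minpoly.dvd F x h)

lemma card_Q [Fintype F] (hn : 0 < n) : Nat.card (Qring F n) = Fintype.card F ^ n := by
  have hm : ((X : F[X]) ^ n - 1).Monic := by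
    simpa using monic_X_pow_sub_C (1 : F) hn.ne'
  have : Module.Finite F (Qring F n) := (AdjoinRoot.powerBasis' hm).finite
  rw [Module.natCard_eq_pow_finrank (K := F), (AdjoinRoot.powerBasis' hm).finrank,
    AdjoinRoot.powerBasis'_dim, Nat.card_eq_fintype_card]
  congr 1
  simpa using natDegree_X_pow_sub_C (n := n) (r := (1 : F))

lemma evQ_frob [Fintype F] (x : AlgebraicClosure F) (hx : x ^ n = 1) (j : ℕ)
    (hx' : (x ^ (Fintype.card F ^ j)) ^ n = 1) (α : Qring F n) :
    evQ F n (x ^ (Fintype.card F ^ j)) hx' α = (evQ F n x hx α) ^ (Fintype.card F ^ j) := by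
  obtain ⟨p, rfl⟩ := AdjoinRoot.mk_surjective α
  rw [evQ_mk, evQ_mk]
  clear hx hx'
  induction j with
  | zero => simp
  | succ j ih =>
    rw [pow_succ, pow_mul, pow_mul, ← ih, ← map_pow, ← FiniteField.expand_card, expand_aeval]

lemma evQ_inj (hn : 0 < n) (ω : AlgebraicClosure F) (hω : IsPrimitiveRoot ω n)
    (hx : ∀ k : ℕ, (ω ^ k) ^ n = 1) (α : Qring F n)
    (h : ∀ k : ℕ, evQ F n (ω ^ k) (hx k) α = 0) : α = 0 := by
  obtain ⟨p, rfl⟩ := AdjoinRoot.mk_surjective α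
  simp only [evQ_mk] at h
  have hm : ((X : F[X]) ^ n - 1).Monic := by
    simpa using monic_X_pow_sub_C (1 : F) hn.ne'
  have hdeg : ((X : F[X]) ^ n - 1).natDegree = n := by
    simpa using natDegree_X_pow_sub_C (n := n) (r := (1 : F))
  rw [AdjoinRoot.mk_eq_zero, ← modByMonic_eq_zero_iff_dvd hm]
  have h0 : (p %ₘ ((X : F[X]) ^ n - 1)).map (algebraMap F (AlgebraicClosure F)) = 0 := by
    refine eq_zero_of_natDegree_lt_card_of_eval_eq_zero _ (ι := Fin n)
      (f := fun k => ω ^ (k : ℕ)) ?_ ?_ ?_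
    · intro a b hab
      exact Fin.ext (hω.pow_inj a.2 b.2 hab)
    · intro k
      rw [eval_map_algebraMap, aeval_modByMonic_eq_self_of_root, h]
      simp [hx]
    · rw [natDegree_map, Fintype.card_fin]
      have := natDegree_modByMonic_lt p hm (by
        intro h1
        rw [h1] at hdeg
        simp at hdeg
        omega)
      omega
  exact (Polynomial.map_eq_zero _).1 h0

lemma card_T [Fintype F] (d : ℕ) (hd : 0 < d) :
    Nat.card {t : AlgebraicClosure F // t ^ (Fintype.card F ^ d) = t} = Fintype.card F ^ d := by
  classical
  obtain ⟨p, hp⟩ := CharP.exists F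
  have h1 : 1 < Fintype.card F := Fintype.one_lt_card
  have hpd : p ∣ Fintype.card F ^ d :=
    dvd_pow ((CharP.cast_eq_zero_iff F p _).1 (by simp)) hd.ne'
  have hsep : ((X : F[X]) ^ (Fintype.card F ^ d) - X).Separable := galois_poly_separable p _ hpd
  have hc := card_rootSet_eq_natDegree (K := AlgebraicClosure F) hsep (IsAlgClosed.splits _)
  rw [FiniteField.X_pow_card_pow_sub_X_natDegree_eq F hd.ne' h1] at hc
  refine Eq.trans ?_ (Nat.card_eq_fintype_card.trans hc)
  refine Nat.card_congr (Equiv.subtypeEquivRight fun t => ?_)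
  rw [mem_rootSet_of_ne hsep.ne_zero]
  simp [sub_eq_zero]

lemma card_A [Fintype F] [NeZero n] (q : ℕ) (hF : Fintype.card F = q)
    (ω : AlgebraicClosure F) (hω : IsPrimitiveRoot ω n)
    (m : ℕ) (s : Fin m → ℕ)
    (d : Fin m → ℕ) (hd : ∀ i, 0 < d i)
    (hds : ∀ i, (q : ZMod n) ^ (d i) * (s i : ZMod n) = s i)
    (hb : Function.Bijective (fun p : (Σ i, Fin (d i)) =>
        (q : ZMod n) ^ (p.2 : ℕ) * (s p.1 : ZMod n))) (I : Finset (Fin m)) :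
    Finite (Qring F n) ∧ (∀ i α, Pbar F n (ω ^ (s i)) ∣ Xbar F n * α ↔ Pbar F n (ω ^ (s i)) ∣ α) ∧
    (∀ k l : ℕ, ∀ α : Qring F n, (∀ i, (Pbar F n (ω ^ (s i)) ∣ α ↔ i ∉ I)) →
      (Xbar F n ^ k * α = Xbar F n ^ l * α ↔
        ∀ i ∈ I, (k : ZMod n) * (s i : ZMod n) = (l : ZMod n) * (s i : ZMod n))) ∧
    Nat.card {α : Qring F n // ∀ i, (Pbar F n (ω ^ (s i)) ∣ α ↔ i ∉ I)} =
      ∏ i, if i ∈ I then q ^ d i - 1 else 1 := by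
  classical
  subst hF
  have hn : 0 < n := NeZero.pos n
  have hpowmod : ∀ a b : ℕ, (a : ZMod n) = b ↔ ω ^ a = ω ^ b := by
    intro a b
    have hu : IsPrimitiveRoot (hω.isUnit hn.ne').unit n := hω.isUnit_unit hn.ne'
    rw [ZMod.natCast_eq_natCast_iff, hu.eq_orderOf, ← pow_eq_pow_iff_modEq, Units.ext_iff]
    simp
  have hx : ∀ k : ℕ, (ω ^ k) ^ n = 1 := by
    intro k
    rw [← pow_mul, mul_comm, pow_mul, hω.pow_eq_one, one_pow]
  have hinj0 : ∀ α : Qring F n, (∀ i, evQ F n (ω ^ s i) (hx _) α = 0) → α = 0 := by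
    intro α h
    refine evQ_inj F n hn ω hω hx α fun k => ?_
    obtain ⟨⟨i, j⟩, hij⟩ := hb.2 (k : ZMod n)
    simp only at hij
    have h1 : ω ^ k = (ω ^ s i) ^ (Fintype.card F ^ (j : ℕ)) := by
      rw [← pow_mul, ← hpowmod, ← hij]
      push_cast
      ring
    have h2 := evQ_frob F n (ω ^ s i) (hx _) j (by rw [← h1]; exact hx k) α
    rw [h i, zero_pow (pow_ne_zero _ Fintype.card_ne_zero)] at h2
    simp only [h1]
    exact h2
  have hinj : ∀ α β : Qring F n,
      (∀ i, evQ F n (ω ^ s i) (hx _) α = evQ F n (ω ^ s i) (hx _) β) → α = β := by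
    intro α β h
    rw [← sub_eq_zero]
    refine hinj0 _ fun i => ?_
    rw [map_sub, h, sub_self]
  have hT : ∀ α i, (evQ F n (ω ^ s i) (hx _) α) ^ (Fintype.card F ^ d i)
      = evQ F n (ω ^ s i) (hx _) α := by
    intro α i
    have h1 : (ω ^ s i) ^ (Fintype.card F ^ d i) = ω ^ s i := by
      rw [← pow_mul, ← hpowmod]
      push_cast
      rw [mul_comm, hds]
    rw [← evQ_frob F n (ω ^ s i) (hx _) (d i) (by rw [h1]; exact hx _) α]
    simp only [h1]
  let T : Fin m → Type := fun i =>
    {t : AlgebraicClosure F // t ^ (Fintype.card F ^ d i) = t}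
  have hTc : ∀ i, Nat.card (T i) = Fintype.card F ^ d i := fun i => card_T F (d i) (hd i)
  have hTf : ∀ i, Finite (T i) := fun i => Nat.finite_of_card_ne_zero (by
    rw [hTc]; exact pow_ne_zero _ Fintype.card_ne_zero)
  let ev : Qring F n → ∀ i, T i := fun α i => ⟨evQ F n (ω ^ s i) (hx _) α, hT α i⟩
  have hev : Function.Bijective ev := by
    rw [Nat.bijective_iff_injective_and_card]
    constructor
    · intro α β h
      exact hinj α β fun i => congrArg Subtype.val (congrFun h i)
    · rw [card_Q F n hn, Nat.card_pi]
      simp only [hTc]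
      rw [Finset.prod_pow_eq_pow_sum]
      congr 1
      have := Nat.card_eq_of_bijective _ hb
      simpa using this.symm
  have hw0 : ∀ k : ℕ, ω ^ k ≠ 0 := fun k => pow_ne_zero _ (hω.ne_zero hn.ne')
  refine ⟨Finite.of_injective ev hev.1, ?_, ?_, ?_⟩
  · intro i α
    rw [Pbar_dvd_iff F n _ (hx _), Pbar_dvd_iff F n _ (hx _), map_mul, evQ_X]
    simp [hw0]
  · intro k l α hα
    simp only [Pbar_dvd_iff F n _ (hx _)] at hα
    have key : ∀ i, evQ F n (ω ^ s i) (hx _) (Xbar F n ^ k * α) =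
        evQ F n (ω ^ s i) (hx _) (Xbar F n ^ l * α) ↔
        (i ∈ I → (k : ZMod n) * (s i : ZMod n) = (l : ZMod n) * (s i : ZMod n)) := by
      intro i
      rw [map_mul, map_mul, map_pow, map_pow, evQ_X]
      by_cases hi : i ∈ I
      · have : evQ F n (ω ^ s i) (hx _) α ≠ 0 := fun h => (hα i).1 h hi
        rw [mul_left_inj' this, ← pow_mul, ← pow_mul, ← hpowmod]
        push_cast
        simp only [hi, forall_const]
        rw [mul_comm, mul_comm (s i : ZMod n)]
      · rw [(hα i).2 hi]
        simp [hi]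
    constructor
    · intro h i
      exact (key i).1 (by rw [h])
    · intro h
      exact hinj _ _ fun i => (key i).2 (h i)
  · have h1 : Nat.card {α : Qring F n // ∀ i, (Pbar F n (ω ^ (s i)) ∣ α ↔ i ∉ I)} =
        Nat.card (∀ i, {t : T i // (t.1 = 0 ↔ i ∉ I)}) := by
      refine Nat.card_congr (Equiv.trans (Equiv.subtypeEquiv (Equiv.ofBijective ev hev)
        (q := fun a : ∀ i, T i => ∀ i, ((a i).1 = 0 ↔ i ∉ I)) ?_)
        (Equiv.subtypePiEquivPi (p := fun i (t : T i) => (t.1 = 0 ↔ i ∉ I))))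
      intro α
      simp only [Pbar_dvd_iff F n _ (hx _)]
      rfl
    rw [h1, Nat.card_pi]
    refine Finset.prod_congr rfl fun i _ => ?_
    have h00 : (0 : AlgebraicClosure F) ^ (Fintype.card F ^ d i) = 0 :=
      zero_pow (pow_ne_zero _ Fintype.card_ne_zero)
    let z : T i := ⟨0, h00⟩
    have hz : ∀ t : T i, t.1 = 0 ↔ t = z := fun t =>
      ⟨fun h => Subtype.ext h, fun h => congrArg Subtype.val h⟩
    have : Fintype (T i) := Fintype.ofFinite _
    by_cases hi : i ∈ I
    · simp only [hi, not_true, iff_false, if_true]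
      have h2 : Nat.card {t : T i // ¬ t.1 = 0} = Nat.card {t : T i // ¬ t = z} :=
        Nat.card_congr (Equiv.subtypeEquivRight fun t => by rw [hz])
      rw [h2, Nat.card_eq_fintype_card, Fintype.card_subtype_compl, Fintype.card_subtype_eq,
        ← Nat.card_eq_fintype_card, hTc]
    · simp only [hi, not_false_eq_true, iff_true, if_false]
      have h2 : Nat.card {t : T i // t.1 = 0} = Nat.card {t : T i // t = z} :=
        Nat.card_congr (Equiv.subtypeEquivRight fun t => by rw [hz])
      rw [h2, Nat.card_eq_fintype_card, Fintype.card_subtype_eq]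

end

/-- For `q` a prime power coprime to `n` and every `I ⊆ {1,…,m}`, the set `N_I` of
necklaces (orbits of `Q = F_q[X]/(X^n-1)` under multiplication by `X`) whose elements are
divisible by `P_i` exactly for `i ∉ I` has the same cardinality as the set `F_I` of
functions `f : ZMod n → {0,…,q-1}` with `∑ z, z·f(z) ≡ 0 (mod n)` taking the value `q-1`
on all of `S_i` exactly for `i ∉ I`. -/
theorem N_I_card_eq_F_I_card
    (q n : ℕ) (hq : IsPrimePow q) (hn : 0 < n) [NeZero n] (hqn : Nat.Coprime q n)
    (F : Type) [Field F] [Fintype F] (hF : Fintype.card F = q)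
    (ω : AlgebraicClosure F) (hω : IsPrimitiveRoot ω n)
    (m : ℕ) (s : Fin m → ℕ)
    (hS : ∀ z : ZMod n, ∃! i : Fin m, ∃ j : ℕ, z = (q : ZMod n) ^ j * (s i : ZMod n)) :
    ∀ I : Finset (Fin m),
      Nat.card {c : Quotient (rotSetoid (Xbar F n)) |
          ∃ α : Qring F n, Quotient.mk (rotSetoid (Xbar F n)) α = c ∧
            ∀ i, (Pbar F n (ω ^ (s i)) ∣ α ↔ i ∉ I)} =
      Nat.card {f : ZMod n → Fin q //
          (∑ z : ZMod n, z * ((f z : ℕ) : ZMod n) = 0) ∧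
          ∀ i, ((∀ z : ZMod n,
              (∃ j : ℕ, z = (q : ZMod n) ^ j * (s i : ZMod n)) → (f z : ℕ) = q - 1)
            ↔ i ∉ I)} := by

  intro I
  obtain ⟨d, hd, hds, hb⟩ := aux_cosets q n m hqn s hS
  obtain ⟨e, he, hek, hFI⟩ := aux_rhs q n m hq.two_le s hS d hd hds hb I
  obtain ⟨-, hX1, hX2, hA⟩ := card_A F n q hF ω hω m s d hd hds hb I
  have hXk : ∀ (k : ℕ) (α : Qring F n), (∀ i, (Pbar F n (ω ^ (s i)) ∣ α ↔ i ∉ I)) →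
      ∀ i, (Pbar F n (ω ^ (s i)) ∣ Xbar F n ^ k * α ↔ i ∉ I) := by
    intro k α hα
    induction k with
    | zero => simpa using hα
    | succ k ih =>
      intro i
      rw [pow_succ', mul_assoc, hX1]
      exact ih i
  have hXinv : ∀ (k : ℕ) (α : Qring F n), Xbar F n ^ ((n - 1) * k) * (Xbar F n ^ k * α) = α := by
    intro k α
    have h1 : (n - 1) * k + k = n * k := by
      rw [← Nat.succ_mul, Nat.succ_eq_add_one, Nat.sub_add_cancel hn]
    rw [← mul_assoc, ← pow_add, h1, pow_mul, Xbar_pow, one_pow, one_mul]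
  have hle : ∀ k l : ℕ, k ≤ l → l < e →
      (∀ i ∈ I, (k : ZMod n) * (s i : ZMod n) = (l : ZMod n) * (s i : ZMod n)) → k = l := by
    intro k l hkl hl h
    have h1 : e ∣ l - k := by
      rw [hek]
      intro i hi
      rw [Nat.cast_sub hkl, sub_mul, h i hi, sub_self]
    have := Nat.eq_zero_of_dvd_of_lt h1 (by omega)
    omega
  have key : Nat.card {α : Qring F n // ∀ i, (Pbar F n (ω ^ (s i)) ∣ α ↔ i ∉ I)} =
      Nat.card {c : Quotient (rotSetoid (Xbar F n)) |
          ∃ α : Qring F n, Quotient.mk (rotSetoid (Xbar F n)) α = c ∧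
            ∀ i, (Pbar F n (ω ^ (s i)) ∣ α ↔ i ∉ I)} * e := by
    have hfin : Nat.card (Fin e) = e := by simp
    conv_rhs => rw [← hfin]
    rw [← Nat.card_prod]
    symm
    refine Nat.card_eq_of_bijective
      (fun p => ⟨Xbar F n ^ (p.2 : ℕ) * Classical.choose p.1.2,
        hXk _ _ (Classical.choose_spec p.1.2).2⟩) ⟨?_, ?_⟩
    · rintro ⟨c, k⟩ ⟨c', l⟩ h
      have h1 : Xbar F n ^ (k : ℕ) * Classical.choose c.2 =
        Xbar F n ^ (l : ℕ) * Classical.choose c'.2 := congrArg Subtype.val h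
      have hc : c = c' := by
        apply Subtype.ext
        rw [← (Classical.choose_spec c.2).1, ← (Classical.choose_spec c'.2).1]
        exact Quotient.sound ⟨k, l, h1⟩
      subst hc
      rw [hX2 _ _ _ (Classical.choose_spec c.2).2] at h1
      have hkl : (k : ℕ) = l := by
        rcases le_total (k : ℕ) l with h2 | h2
        · exact hle _ _ h2 l.2 h1
        · exact (hle _ _ h2 k.2 fun i hi => (h1 i hi).symm).symm
      rw [Fin.ext hkl]
    · rintro ⟨α, hα⟩
      let c : {c : Quotient (rotSetoid (Xbar F n)) |
          ∃ α : Qring F n, Quotient.mk (rotSetoid (Xbar F n)) α = c ∧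
            ∀ i, (Pbar F n (ω ^ (s i)) ∣ α ↔ i ∉ I)} := ⟨Quotient.mk _ α, α, rfl, hα⟩
      obtain ⟨j, k, hjk⟩ := Quotient.exact (Classical.choose_spec c.2).1
      refine ⟨⟨c, ⟨((n - 1) * k + j) % e, Nat.mod_lt _ he⟩⟩, Subtype.ext ?_⟩
      have h2 := hXinv k α
      rw [← hjk, ← mul_assoc, ← pow_add] at h2
      refine Eq.trans ?_ h2
      refine (hX2 _ _ _ (Classical.choose_spec c.2).2).2 fun i hi => ?_
      have h3 := (hek e).1 dvd_rfl i hi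
      conv_rhs => rw [← Nat.mod_add_div ((n - 1) * k + j) e]
      rw [Nat.cast_add, Nat.cast_mul, add_mul, mul_right_comm, h3, zero_mul, add_zero]
  refine Nat.eq_of_mul_eq_mul_right he ?_
  rw [hFI, ← hA, key]
end
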